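/- Let λ > 0 and q ∈ (0,1), and set φ(λ) = (1-λ)/(1+λ). Then λ^q equals the limit of the continued fraction [1; (2qφ(λ))/(-1 - qφ(λ)), ((q²-1²)φ(λ)²)/(-3), ((q²-2²)φ(λ)²)/(-5), ..., ((q²-(k-1)²)φ(λ)²)/(-(2k-1)), ...], i.e., the sequence of its convergents converges to λ^q. -/

import Mathlib

open Filter

noncomputable def cfU (s x : ℝ) : ℕ → ℝ
  | 0 => 1
  | 1 => 1 - s * x
  | (n + 2) => (2 * (n : ℝ) + 3) * cfU s x (n + 1) - (((n : ℝ) + 1) ^ 2 - s ^ 2) * x ^ 2 * cfU s x n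

lemma cfU_two (s x : ℝ) (n : ℕ) : cfU s x (n + 2) =
    (2 * (n : ℝ) + 3) * cfU s x (n + 1) - (((n : ℝ) + 1) ^ 2 - s ^ 2) * x ^ 2 * cfU s x n := rfl

lemma cfU_zero (s x : ℝ) : cfU s x 0 = 1 := rfl

lemma cfU_one (s x : ℝ) : cfU s x 1 = 1 - s * x := rfl

lemma cfU_pos (q s x : ℝ) (hq0 : 0 < q) (hq1 : q < 1) (hs : s ^ 2 = q ^ 2) (hsx : s * x ≤ q)
    (hx : x ^ 2 ≤ 1) (n : ℕ) :
    0 < cfU s x n ∧ ((n : ℝ) + 1 - q) * cfU s x n ≤ cfU s x (n + 1) := by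
  induction n with
  | zero => simp [cfU_zero, cfU_one]; linarith
  | succ n ih =>
    obtain ⟨h0, h1⟩ := ih
    have hn : (0 : ℝ) ≤ n := n.cast_nonneg
    have hpos : 0 < cfU s x (n + 1) := lt_of_lt_of_le (mul_pos (by linarith) h0) h1
    refine ⟨hpos, ?_⟩
    rw [cfU_two, hs]
    push_cast
    have e1 : ((n : ℝ) + 1 + q) * (((n : ℝ) + 1 - q) * cfU s x n) ≤ ((n : ℝ) + 1 + q) * cfU s x (n + 1) :=
      mul_le_mul_of_nonneg_left h1 (by linarith)
    have e2 : 0 ≤ (((n : ℝ) + 1) ^ 2 - q ^ 2) * cfU s x n := by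
      apply mul_nonneg _ h0.le
      nlinarith
    nlinarith [mul_le_mul_of_nonneg_left hx e2]

noncomputable def cfM (q : ℝ) (n : ℕ) : ℝ := ∏ k ∈ Finset.range n, ((k : ℝ) + 1 - q)

lemma cfM_pos (q : ℝ) (hq1 : q < 1) (n : ℕ) : 0 < cfM q n := by
  apply Finset.prod_pos
  intro k _
  have hn : (0 : ℝ) ≤ k := k.cast_nonneg
  linarith

lemma cfM_le (q s x : ℝ) (hq0 : 0 < q) (hq1 : q < 1) (hs : s ^ 2 = q ^ 2) (hsx : s * x ≤ q)
    (hx : x ^ 2 ≤ 1) (n : ℕ) : cfM q n ≤ cfU s x n := by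
  induction n with
  | zero => simp [cfM, cfU_zero]
  | succ n ih =>
    have hn : (0 : ℝ) ≤ n := n.cast_nonneg
    have h := (cfU_pos q s x hq0 hq1 hs hsx hx n).2
    have : cfM q (n + 1) = ((n : ℝ) + 1 - q) * cfM q n := by
      rw [cfM, Finset.prod_range_succ, mul_comm]; rfl
    rw [this]
    exact (mul_le_mul_of_nonneg_left ih (by linarith)).trans h

/-- ladder derivative -/
lemma cfU_deriv (s x : ℝ) (hx : x ^ 2 < 1) (n : ℕ) :
    HasDerivAt (fun y => cfU s y (n + 1))
      ((-(s + ((n : ℝ) + 1) * x) * cfU s x (n + 1) + (((n : ℝ) + 1) ^ 2 - s ^ 2) * x * cfU s x n) / (1 - x ^ 2)) x := by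
  have hne : 1 - x ^ 2 ≠ 0 := by linarith
  have h1 : HasDerivAt (fun y => cfU s y 1) (-s) x := by
    have := ((hasDerivAt_id x).const_mul s).const_sub 1
    simpa [cfU_one] using this
  induction n using Nat.twoStepInduction with
  | zero =>
    convert h1 using 1
    rw [cfU_one, cfU_zero]
    field_simp
    push_cast
    ring
  | one =>
    have h0 : HasDerivAt (fun y => cfU s y 0) 0 x := by
      simpa [cfU_zero] using hasDerivAt_const x (1 : ℝ)
    have h := (h1.const_mul (2 * ((0 : ℕ) : ℝ) + 3)).sub
      ((((hasDerivAt_id x).pow 2).const_mul ((((0 : ℕ) : ℝ) + 1) ^ 2 - s ^ 2)).mul h0)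
    refine h.congr_deriv ?_
    simp only [cfU_two, cfU_one, cfU_zero, id, Pi.pow_apply, zero_add, show (1 + 1 : ℕ) = 0 + 2 from rfl]
    field_simp
    push_cast
    ring
  | more n ih0 ih1 =>
    have h := (ih1.const_mul (2 * ((n + 1 : ℕ) : ℝ) + 3)).sub
      ((((hasDerivAt_id x).pow 2).const_mul ((((n + 1 : ℕ) : ℝ) + 1) ^ 2 - s ^ 2)).mul ih0)
    refine h.congr_deriv ?_
    have e := cfU_two s x (n + 1)
    have e' := cfU_two s x n
    simp only [id, Pi.pow_apply]
    rw [e]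
    simp only [show n + 1 + 1 = n + 2 from rfl]
    rw [e']
    field_simp
    push_cast
    ring

lemma cfU_cas (s x : ℝ) (n : ℕ) :
    cfU s x n * cfU (-s) x (n + 1) - cfU s x (n + 1) * cfU (-s) x n =
      2 * s * x * x ^ (2 * n) * ∏ k ∈ Finset.range n, (((k : ℝ) + 1) ^ 2 - s ^ 2) := by
  induction n with
  | zero => simp [cfU_zero, cfU_one]; ring
  | succ n ih =>
    rw [Finset.prod_range_succ, cfU_two, cfU_two]
    have : 2 * s * x * x ^ (2 * (n + 1)) * ((∏ k ∈ Finset.range n, (((k : ℝ) + 1) ^ 2 - s ^ 2)) * (((n : ℝ) + 1) ^ 2 - s ^ 2))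
      = (((n : ℝ) + 1) ^ 2 - s ^ 2) * x ^ 2 * (2 * s * x * x ^ (2 * n) * ∏ k ∈ Finset.range n, (((k : ℝ) + 1) ^ 2 - s ^ 2)) := by
      ring
    rw [this, ← ih]
    ring

noncomputable def cfA (q r : ℝ) (n : ℕ) : ℝ :=
  r ^ (2 * n) * ∏ k ∈ Finset.range n, (((k : ℝ) + 1 + q) / ((k : ℝ) + 1 - q))

lemma cfA_pos (q r : ℝ) (hq0 : 0 < q) (hq1 : q < 1) (hr : 0 < r) (n : ℕ) : 0 < cfA q r n := by
  apply mul_pos (by positivity)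
  apply Finset.prod_pos
  intro k _
  have hn : (0 : ℝ) ≤ k := k.cast_nonneg
  exact div_pos (by linarith) (by linarith)

lemma cfA_tendsto (q r : ℝ) (hq0 : 0 < q) (hq1 : q < 1) (hr : 0 < r) (hr1 : r < 1) :
    Tendsto (cfA q r) atTop (nhds 0) := by
  apply Summable.tendsto_atTop_zero
  apply summable_of_ratio_test_tendsto_lt_one (l := r ^ 2) (by nlinarith)
  · exact Eventually.of_forall fun n => (cfA_pos q r hq0 hq1 hr n).ne'
  · have e : ∀ n : ℕ, ‖cfA q r (n + 1)‖ / ‖cfA q r n‖ = r ^ 2 * (1 + 2 * q * (((n : ℝ) + (1 - q))⁻¹)) := by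
      intro n
      have h0 := cfA_pos q r hq0 hq1 hr n
      have h1 := cfA_pos q r hq0 hq1 hr (n + 1)
      rw [Real.norm_of_nonneg h0.le, Real.norm_of_nonneg h1.le, div_eq_iff h0.ne']
      have hn : (0 : ℝ) ≤ n := n.cast_nonneg
      have hne : (n : ℝ) + 1 - q ≠ 0 := by linarith
      have : 1 + 2 * q * (((n : ℝ) + (1 - q))⁻¹) = ((n : ℝ) + 1 + q) / ((n : ℝ) + 1 - q) := by
        rw [show (n : ℝ) + (1 - q) = n + 1 - q by ring]
        field_simp
        ring
      rw [this, cfA, cfA, Finset.prod_range_succ]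
      ring
    simp_rw [e]
    have ht : Tendsto (fun n : ℕ => ((n : ℝ) + (1 - q))⁻¹) atTop (nhds 0) :=
      tendsto_inv_atTop_zero.comp (tendsto_atTop_add_const_right _ _ tendsto_natCast_atTop_atTop)
    simpa using ((ht.const_mul (2 * q)).const_add 1).const_mul (r ^ 2)

noncomputable def cfG (q : ℝ) (n : ℕ) (y : ℝ) : ℝ :=
  Real.log (cfU q y (n + 1)) - Real.log (cfU (-q) y (n + 1)) + q * (Real.log (1 + y) - Real.log (1 - y))

lemma cfG_deriv (q : ℝ) (hq0 : 0 < q) (hq1 : q < 1) (n : ℕ) (x : ℝ) (hx : |x| < 1) :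
    HasDerivAt (cfG q n) ((((n : ℝ) + 1) ^ 2 - q ^ 2) * x *
      (cfU q x n * cfU (-q) x (n + 1) - cfU q x (n + 1) * cfU (-q) x n) /
      ((1 - x ^ 2) * (cfU q x (n + 1) * cfU (-q) x (n + 1)))) x := by
  obtain ⟨hl, hu⟩ := abs_lt.1 hx
  have hx2 : x ^ 2 < 1 := by nlinarith
  have hP := (cfU_pos q q x hq0 hq1 rfl (by nlinarith) hx2.le (n + 1)).1
  have hQ := (cfU_pos q (-q) x hq0 hq1 (by ring) (by nlinarith) hx2.le (n + 1)).1
  have d1 := (cfU_deriv q x hx2 n).log hP.ne'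
  have d2 := (cfU_deriv (-q) x hx2 n).log hQ.ne'
  have d3 := ((hasDerivAt_id x).const_add 1).log (by simp; linarith)
  have d4 := ((hasDerivAt_id x).const_sub 1).log (by simp; linarith)
  refine ((d1.sub d2).add ((d3.sub d4).const_mul q)).congr_deriv ?_
  have hne : 1 - x ^ 2 ≠ 0 := by linarith
  have hp : 1 + x ≠ 0 := by linarith
  have hm : 1 - x ≠ 0 := by linarith
  have : 1 / (1 + x) - -1 / (1 - x) = 2 / (1 - x ^ 2) := by
    rw [show 1 - x ^ 2 = (1 + x) * (1 - x) by ring]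
    field_simp
    ring
  simp only [id]
  rw [this]
  generalize cfU q x (n + 1) = P at *
  generalize cfU (-q) x (n + 1) = Q at *
  have hP' := hP.ne'
  have hQ' := hQ.ne'
  field_simp
  ring

lemma cfG_bound (q r : ℝ) (hq0 : 0 < q) (hq1 : q < 1) (hr1 : r < 1) (n : ℕ) (x : ℝ)
    (hx : |x| ≤ r) :
    |(((n : ℝ) + 1) ^ 2 - q ^ 2) * x *
      (cfU q x n * cfU (-q) x (n + 1) - cfU q x (n + 1) * cfU (-q) x n) /
      ((1 - x ^ 2) * (cfU q x (n + 1) * cfU (-q) x (n + 1)))| ≤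
      2 * q / (1 - r ^ 2) * cfA q r (n + 1) := by
  obtain ⟨hl, hu⟩ := abs_lt.1 (hx.trans_lt hr1)
  have hx2 : x ^ 2 < 1 := by nlinarith
  have hr0 : 0 ≤ r := (abs_nonneg x).trans hx
  have hxr : x ^ 2 ≤ r ^ 2 := by rw [← sq_abs x]; gcongr
  have hr2 : r ^ 2 < 1 := by nlinarith
  have hP := cfM_le q q x hq0 hq1 rfl (by nlinarith) hx2.le (n + 1)
  have hQ := cfM_le q (-q) x hq0 hq1 (by ring) (by nlinarith) hx2.le (n + 1)
  have hM := cfM_pos q hq1 (n + 1)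
  rw [cfU_cas]
  have e : (((n : ℝ) + 1) ^ 2 - q ^ 2) * x *
      (2 * q * x * x ^ (2 * n) * ∏ k ∈ Finset.range n, (((k : ℝ) + 1) ^ 2 - q ^ 2)) =
      2 * q * (x ^ 2) ^ (n + 1) * (cfM q (n + 1) * ∏ k ∈ Finset.range (n + 1), ((k : ℝ) + 1 + q)) := by
    rw [cfM, ← Finset.prod_mul_distrib, Finset.prod_range_succ]
    have : ∀ k : ℕ, ((k : ℝ) + 1 - q) * ((k : ℝ) + 1 + q) = ((k : ℝ) + 1) ^ 2 - q ^ 2 := fun k => by ring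
    simp_rw [this]
    ring
  have eA : 2 * q / (1 - r ^ 2) * cfA q r (n + 1) =
      2 * q * (r ^ 2) ^ (n + 1) * (cfM q (n + 1) * ∏ k ∈ Finset.range (n + 1), ((k : ℝ) + 1 + q)) /
        ((1 - r ^ 2) * (cfM q (n + 1) * cfM q (n + 1))) := by
    rw [cfA, Finset.prod_div_distrib, pow_mul]
    change _ / _ * (_ * (_ / cfM q (n + 1))) = _
    have : 1 - r ^ 2 ≠ 0 := by linarith
    have := hM.ne'
    field_simp
  rw [e, eA]
  have hN : 0 < ∏ k ∈ Finset.range (n + 1), ((k : ℝ) + 1 + q) :=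
    Finset.prod_pos fun k _ => by positivity
  have h1 : 0 < 1 - r ^ 2 := by linarith
  have h2 : 0 < 1 - x ^ 2 := by linarith
  have hP0 := hM.trans_le hP
  have hQ0 := hM.trans_le hQ
  rw [abs_of_nonneg (by positivity)]
  gcongr

lemma cfU_at_zero (s t : ℝ) (n : ℕ) : cfU s 0 n = cfU t 0 n := by
  induction n using Nat.twoStepInduction with
  | zero => rfl
  | one => simp [cfU_one]
  | more n h0 h1 => simp [cfU_two, h1]

lemma cfG_le (q r : ℝ) (hq0 : 0 < q) (hq1 : q < 1) (hr1 : r < 1) (n : ℕ) (x : ℝ)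
    (hx : |x| ≤ r) : |cfG q n x| ≤ 2 * q / (1 - r ^ 2) * cfA q r (n + 1) * |x| := by
  have hr0 : 0 ≤ r := (abs_nonneg x).trans hx
  have h := Convex.norm_image_sub_le_of_norm_hasDerivWithin_le (f := cfG q n) (s := Set.Icc (-r) r)
    (x := 0) (y := x)
    (fun y hy => (cfG_deriv q hq0 hq1 n y ((abs_le.2 hy).trans_lt hr1)).hasDerivWithinAt)
    (fun y hy => by
      rw [Real.norm_eq_abs]
      exact cfG_bound q r hq0 hq1 hr1 n y (abs_le.2 hy))
    (convex_Icc _ _) ⟨by linarith, hr0⟩ (abs_le.1 hx)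
  have h0 : cfG q n 0 = 0 := by
    simp [cfG, cfU_at_zero q (-q)]
  simpa [h0] using h

lemma cf_ratio (q x : ℝ) (hq0 : 0 < q) (hq1 : q < 1) (hx : |x| < 1) :
    Tendsto (fun n => cfU q x (n + 1) / cfU (-q) x (n + 1)) atTop (nhds (((1 - x) / (1 + x)) ^ q)) := by
  obtain ⟨hl, hu⟩ := abs_lt.1 hx
  have hx2 : x ^ 2 < 1 := by nlinarith
  obtain ⟨r, hxr, hr1⟩ := exists_between hx
  have hr : 0 < r := (abs_nonneg x).trans_lt hxr
  have hG : Tendsto (fun n => cfG q n x) atTop (nhds 0) := by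
    have hA := (((cfA_tendsto q r hq0 hq1 hr hr1).comp (tendsto_add_atTop_nat 1)).const_mul
      (2 * q / (1 - r ^ 2))).mul_const |x|
    rw [mul_zero, zero_mul] at hA
    exact squeeze_zero_norm (fun n => cfG_le q r hq0 hq1 hr1 n x hxr.le) hA
  have hE := ((Real.continuous_exp.tendsto 0).comp hG).mul_const (((1 - x) / (1 + x)) ^ q)
  rw [Real.exp_zero, one_mul] at hE
  refine hE.congr fun n => ?_
  have hP := (cfU_pos q q x hq0 hq1 rfl (by nlinarith) hx2.le (n + 1)).1
  have hQ := (cfU_pos q (-q) x hq0 hq1 (by ring) (by nlinarith) hx2.le (n + 1)).1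
  have hp : 0 < 1 + x := by linarith
  have hm : 0 < 1 - x := by linarith
  rw [Real.rpow_def_of_pos (by positivity), Real.log_div hm.ne' hp.ne']
  simp only [Function.comp]
  rw [← Real.exp_add, ← Real.exp_log (div_pos hP hQ), Real.log_div hP.ne' hQ.ne', cfG]
  congr 1
  ring

/-- Continued fraction expansion of `λ^q` (Lemma 3.3 (i)): with `φ = (1-λ)/(1+λ)`,
the convergents of `[1; 2qφ/(-1-qφ), ((q²-(k-1)²)φ²)/(-(2k-1)) for k ≥ 2]`
converge to `λ^q`.  Indices are shifted by one: `p 0 = p_{-1} = 1`, `p 1 = p₀ = a₀`, etc. -/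
theorem cf_rpow (lam q : ℝ) (hlam : 0 < lam) (hq0 : 0 < q) (hq1 : q < 1)
    (phi : ℝ) (hphi : phi = (1 - lam) / (1 + lam))
    (a b p pq : ℕ → ℝ)
    (ha0 : a 0 = 1)
    (hb1 : b 1 = 2 * q * phi) (ha1 : a 1 = -1 - q * phi)
    (hb : ∀ k : ℕ, 2 ≤ k → b k = (q ^ 2 - ((k : ℝ) - 1) ^ 2) * phi ^ 2)
    (ha : ∀ k : ℕ, 2 ≤ k → a k = -(2 * (k : ℝ) - 1))
    (hp0 : p 0 = 1) (hp1 : p 1 = a 0)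
    (hq0' : pq 0 = 0) (hq1' : pq 1 = 1)
    (hp : ∀ k, 1 ≤ k → p (k + 1) = a k * p k + b k * p (k - 1))
    (hpq : ∀ k, 1 ≤ k → pq (k + 1) = a k * pq k + b k * pq (k - 1)) :
    Tendsto (fun n => p (n + 1) / pq (n + 1)) atTop (nhds (lam ^ q)) := by
  have h1l : 0 < 1 + lam := by linarith
  have hx : |phi| < 1 := by
    rw [hphi, abs_lt, lt_div_iff₀ h1l, div_lt_iff₀ h1l]
    constructor <;> linarith
  have hlam' : lam = (1 - phi) / (1 + phi) := by
    have : 1 + phi ≠ 0 := by linarith [(abs_lt.1 hx).1]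
    rw [eq_div_iff this, hphi]
    field_simp
    ring
  have hP : ∀ n, p (n + 1) = (-1) ^ n * cfU q phi n := by
    intro n
    induction n using Nat.twoStepInduction with
    | zero => simp [hp1, ha0, cfU_zero]
    | one =>
      rw [hp 1 le_rfl, ha1, hb1, hp1, ha0, Nat.sub_self, hp0, cfU_one]
      ring
    | more n h0 h1 =>
      rw [hp (n + 2) (by omega), ha _ (by omega), hb _ (by omega),
        show n + 2 - 1 = n + 1 from rfl, h0, show n + 2 = n + 1 + 1 from rfl, h1, cfU_two]
      push_cast
      ring
  have hQ : ∀ n, pq (n + 1) = (-1) ^ n * cfU (-q) phi n := by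
    intro n
    induction n using Nat.twoStepInduction with
    | zero => simp [hq1', cfU_zero]
    | one =>
      rw [hpq 1 le_rfl, ha1, hb1, hq1', Nat.sub_self, hq0', cfU_one]
      ring
    | more n h0 h1 =>
      rw [hpq (n + 2) (by omega), ha _ (by omega), hb _ (by omega),
        show n + 2 - 1 = n + 1 from rfl, h0, show n + 2 = n + 1 + 1 from rfl, h1, cfU_two]
      push_cast
      ring
  have key : Tendsto (fun n => cfU q phi n / cfU (-q) phi n) atTop (nhds (lam ^ q)) := by
    rw [← tendsto_add_atTop_iff_nat 1, hlam']
    exact cf_ratio q phi hq0 hq1 hx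
  refine key.congr fun n => ?_
  rw [hP, hQ, mul_div_mul_left]
  exact pow_ne_zero _ (by norm_num)
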